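/- arXiv:1006.1928 — 4 statements merged into one kernel-verified Lean document; each statement's English description precedes it below -/
import Mathlib

section
/- Assume F is locally connected, σ-compact and locally compact. Let Φ ∈ E_F^R and let r satisfy the standing assumptions including (A_r), with condition (C_{r,R}). Let {f_n} be a sequence in Hom(F) such that (C1) for every compact K ⊆ F the restrictions {f_n|_K} and {f_n⁻¹|_K} are uniformly bounded, and (C2) {f_n} is ρ⁺_{Φ,r}-Cauchy. Then {f_n} converges in T⁻(ρ_{Φ,r}) towards an element of Hom(F): there exists f ∈ Hom(F) with ρ_{Φ,r}(f, f_n) → 0 as n → ∞. -/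
open Filter Topology
open scoped ENNReal

noncomputable section

/-- `|f|_{Φ,r} = sup_{x ∈ F} r(‖f(x) − x‖)/Φ(x) ∈ [0,∞]`. -/
def phiNorm {E : Type*} [NormedAddCommGroup E] (F : Set E) (Φ : F → ℝ) (r : ℝ → ℝ)
    (f : F → F) : ℝ≥0∞ :=
  ⨆ x : F, ENNReal.ofReal (r ‖(f x : E) - (x : E)‖ / Φ x)

/-- The premetric `ρ_{Φ,r}(f,g) = max(|f∘g⁻¹|_{Φ,r}, |f⁻¹∘g|_{Φ,r})`. -/
def phiDist {E : Type*} [NormedAddCommGroup E] (F : Set E) (Φ : F → ℝ) (r : ℝ → ℝ)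
    (f g : F ≃ₜ F) : ℝ≥0∞ :=
  max (phiNorm F Φ r fun x => f (g.symm x)) (phiNorm F Φ r fun x => f.symm (g x))

/-- `H_{Φ,r} = {f ∈ Hom(F) : |f|_{Φ,r} < ∞ and |f⁻¹|_{Φ,r} < ∞}`. -/
def Hgroup {E : Type*} [NormedAddCommGroup E] (F : Set E) (Φ : F → ℝ) (r : ℝ → ℝ) :
    Set (F ≃ₜ F) :=
  {f | phiNorm F Φ r ⇑f < ⊤ ∧ phiNorm F Φ r ⇑f.symm < ⊤}

/-- A growth function `R : [0,∞) → (0,∞)`: continuous and subadditive. -/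
structure GrowthFun (R : ℝ → ℝ) : Prop where
  pos : ∀ u, 0 ≤ u → 0 < R u
  cont : ContinuousOn R (Set.Ici 0)
  subadd : ∀ u v, 0 ≤ u → 0 ≤ v → R (u + v) ≤ R u + R v

/-- `Φ ∈ E_F^R`, with constants `m` (condition (G1)) and `β > γ > 0` (condition (G3));
condition (G2) is the coercivity. -/
structure MemE {E : Type*} [NormedAddCommGroup E] (F : Set E) (R : ℝ → ℝ) (Φ : F → ℝ)
    (m β γ : ℝ) : Prop where
  cont : Continuous Φ
  nonneg : ∀ x : F, 0 ≤ Φ x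
  m_pos : 0 < m
  m_le : ∀ x : F, m ≤ Φ x
  coercive : ∀ C : ℝ, ∃ M : ℝ, ∀ x : F, M ≤ ‖(x : E)‖ → C ≤ Φ x
  gamma_pos : 0 < γ
  gamma_lt_beta : γ < β
  lower : ∀ x : F, γ * R ‖(x : E)‖ ≤ Φ x
  upper : ∀ x : F, Φ x ≤ β * R ‖(x : E)‖

/-- The standing assumptions on `r : [0,∞) → [0,∞)`: `r(x) = 0` iff `x = 0`, continuity
at `0`, nondecreasing, subadditive. -/
structure StandingR (r : ℝ → ℝ) : Prop where
  nonneg : ∀ u, 0 ≤ u → 0 ≤ r u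
  zero_iff : ∀ u, 0 ≤ u → (r u = 0 ↔ u = 0)
  cont_at_zero : ContinuousWithinAt r (Set.Ici 0) 0
  mono : MonotoneOn r (Set.Ici 0)
  subadd : ∀ u v, 0 ≤ u → 0 ≤ v → r (u + v) ≤ r u + r v

/-- Condition `(A_r)`: lower semicontinuity of `r` for the simple convergence on `F`. -/
def Ar {E : Type*} [NormedAddCommGroup E] (F : Set E) (r : ℝ → ℝ) : Prop :=
  ∀ (g : ℕ → F → F) (x : F),
    r (Filter.liminf (fun n => ‖(g n x : E)‖) Filter.atTop) ≤
      Filter.liminf (fun n => r ‖(g n x : E)‖) Filter.atTop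

/-- The ball `B⁻(f,α) = {g ∈ H_{Φ,r} : ρ_{Φ,r}(f,g) < α}`. -/
def BallMinus {E : Type*} [NormedAddCommGroup E] (F : Set E) (Φ : F → ℝ) (r : ℝ → ℝ)
    (f : F ≃ₜ F) (α : ℝ) : Set (F ≃ₜ F) :=
  {g | g ∈ Hgroup F Φ r ∧ phiDist F Φ r f g < ENNReal.ofReal α}

/-- The ball `B⁺(f,α) = {g ∈ H_{Φ,r} : ρ_{Φ,r}(g,f) < α}`. -/
def BallPlus {E : Type*} [NormedAddCommGroup E] (F : Set E) (Φ : F → ℝ) (r : ℝ → ℝ)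
    (f : F ≃ₜ F) (α : ℝ) : Set (F ≃ₜ F) :=
  {g | g ∈ Hgroup F Φ r ∧ phiDist F Φ r g f < ENNReal.ofReal α}

/-- The family `T⁻(ρ_{Φ,r})`. -/
def Tminus {E : Type*} [NormedAddCommGroup E] (F : Set E) (Φ : F → ℝ) (r : ℝ → ℝ) :
    Set (Set (F ≃ₜ F)) :=
  {H | H ⊆ Hgroup F Φ r ∧ ∀ f ∈ H, ∃ α : ℝ, 0 < α ∧ BallMinus F Φ r f α ⊆ H}

/-- The family `T⁺(ρ_{Φ,r})`. -/
def Tplus {E : Type*} [NormedAddCommGroup E] (F : Set E) (Φ : F → ℝ) (r : ℝ → ℝ) :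
    Set (Set (F ≃ₜ F)) :=
  {H | H ⊆ Hgroup F Φ r ∧ ∀ f ∈ H, ∃ α : ℝ, 0 < α ∧ BallPlus F Φ r f α ⊆ H}

/-- The `r`-Lipschitz constant `λ_r(f) ∈ [0,∞]`. -/
def lambdaR {E : Type*} [NormedAddCommGroup E] (F : Set E) (r : ℝ → ℝ) (f : F → F) : ℝ≥0∞ :=
  ⨆ (x : F) (y : F) (_ : x ≠ y),
    ENNReal.ofReal (r ‖(f x : E) - (f y : E)‖ / r ‖(x : E) - (y : E)‖)

/-- `L_r(F)`, the set of `r`-Lipeomorphisms of `F`. -/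
def LipGroup {E : Type*} [NormedAddCommGroup E] (F : Set E) (r : ℝ → ℝ) : Set (F ≃ₜ F) :=
  {f | lambdaR F r ⇑f < ⊤ ∧ lambdaR F r ⇑f.symm < ⊤}

/-- The conjugacy operator `L_{f,g}(h) = f ∘ h ∘ g⁻¹`. -/
def conjOp {E : Type*} [NormedAddCommGroup E] (F : Set E) (f g : F ≃ₜ F) :
    (F ≃ₜ F) → (F ≃ₜ F) :=
  fun h => (g.symm.trans h).trans f

/-! `ρ_{Φ,r}(f, g) ≤ ε` says that `r ‖f y - g y‖ ≤ ε Φ(g y)` for every `y`, and likewise for the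
inverses. Since `Φ` grows at most like `r ‖·‖ + 1`, the case `ε = 1` bounds `Φ (fₙ y)` locally
uniformly in `y` and uniformly in large `n`, so a `ρ⁺`-Cauchy sequence is locally uniformly Cauchy.

Its limits do not leave `F`: the points `f_q⁻¹ (f_p x)` tend to `x` as `p ≥ q → ∞`, so for a large
fixed `q` they stay in a compact neighbourhood `K` of `x`, and `f_p x` stays in the compact set
`f_q(K) ⊆ F`. The inverses behave in the same way, hence the limit is a homeomorphism, and the
Cauchy estimate passes to the limit in `p` because `r ‖·‖` is continuous. -/

section LocallyUniformLimit

variable {X Y ι : Type*} {l : Filter ι} [l.NeBot] [UniformSpace X]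

lemma leftInverse_of_tendstoLocallyUniformly [TopologicalSpace Y] [T2Space X]
    {u : ι → X → Y} {v : ι → Y → X} {f : X → Y} {g : Y → X}
    (huv : ∀ n, Function.LeftInverse (v n) (u n)) (hu : ∀ x, Tendsto (u · x) l (𝓝 (f x)))
    (hv : TendstoLocallyUniformly v g l) (hg : Continuous g) : Function.LeftInverse g f := by
  intro x
  have hlim := hv.tendsto_comp hg.continuousAt (hu x)
  simp only [huv _ x] at hlim
  exact tendsto_nhds_unique hlim tendsto_const_nhds

lemma exists_homeomorph_of_tendstoLocallyUniformly [UniformSpace Y] [T2Space X] [T2Space Y]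
    {u : ι → X ≃ₜ Y} {f : X → Y} {g : Y → X}
    (hf : TendstoLocallyUniformly (fun n => u n) f l)
    (hg : TendstoLocallyUniformly (fun n => (u n).symm) g l) :
    ∃ h : X ≃ₜ Y, ⇑h = f ∧ ⇑h.symm = g := by
  have hfc : Continuous f := hf.continuous (.of_forall fun n => (u n).continuous)
  have hgc : Continuous g := hg.continuous (.of_forall fun n => (u n).symm.continuous)
  have hfx (x : X) : Tendsto (u · x) l (𝓝 (f x)) :=
    hf.tendsto_comp hfc.continuousAt tendsto_const_nhds
  have hgy (y : Y) : Tendsto (fun n => (u n).symm y) l (𝓝 (g y)) :=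
    hg.tendsto_comp hgc.continuousAt tendsto_const_nhds
  exact ⟨{ toFun := f
           invFun := g
           left_inv := leftInverse_of_tendstoLocallyUniformly (fun n => (u n).left_inv) hfx hg hgc
           right_inv := leftInverse_of_tendstoLocallyUniformly (fun n => (u n).right_inv) hgy hf hfc
           continuous_toFun := hfc
           continuous_invFun := hgc }, rfl, rfl⟩

end LocallyUniformLimit

lemma tendsto_nhds_zero_of_eventually_le_ofReal {α : Type*} {l : Filter α} {u : α → ℝ≥0∞}
    (h : ∀ ε : ℝ, 0 < ε → ∀ᶠ x in l, u x ≤ ENNReal.ofReal ε) : Tendsto u l (𝓝 0) := by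
  rw [ENNReal.tendsto_nhds_zero]
  intro ε hε
  obtain ⟨c, hc, hcε⟩ := ENNReal.lt_iff_exists_nnreal_btwn.1 hε
  filter_upwards [h c (mod_cast hc)] with x hx
  exact hx.trans (by simpa only [ENNReal.ofReal_coe_nnreal] using hcε.le)

section DominatedWeight

variable {E : Type*} [NormedAddCommGroup E] {F : Set E} {Φ : F → ℝ} {r : ℝ → ℝ} {C : ℝ}

namespace StandingR

lemma map_zero (hr : StandingR r) : r 0 = 0 :=
  (hr.zero_iff 0 le_rfl).2 rfl

lemma pos (hr : StandingR r) {u : ℝ} (hu : 0 < u) : 0 < r u :=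
  (hr.nonneg u hu.le).lt_of_ne fun h => hu.ne' ((hr.zero_iff u hu.le).1 h.symm)

lemma map_norm_nonneg (hr : StandingR r) (v : E) : 0 ≤ r ‖v‖ :=
  hr.nonneg _ (norm_nonneg v)

lemma norm_lt_of_lt (hr : StandingR r) {v : E} {δ : ℝ} (hδ : 0 < δ) (h : r ‖v‖ < r δ) : ‖v‖ < δ :=
  hr.mono.reflect_lt (norm_nonneg v) hδ.le h

lemma map_norm_le_add (hr : StandingR r) (v w : E) : r ‖v‖ ≤ r ‖w‖ + r ‖v - w‖ :=
  calc r ‖v‖ ≤ r (‖w‖ + ‖v - w‖) :=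
        hr.mono (norm_nonneg _) (add_nonneg (norm_nonneg _) (norm_nonneg _))
          (norm_le_norm_add_norm_sub' v w)
    _ ≤ r ‖w‖ + r ‖v - w‖ := hr.subadd _ _ (norm_nonneg _) (norm_nonneg _)

lemma abs_map_norm_sub_map_norm_le (hr : StandingR r) (v w : E) :
    |r ‖v‖ - r ‖w‖| ≤ r ‖v - w‖ := by
  have hvw := hr.map_norm_le_add v w
  have hwv := hr.map_norm_le_add w v
  rw [norm_sub_rev w v] at hwv
  exact abs_sub_le_iff.2 ⟨by linarith, by linarith⟩

lemma continuous_map_norm (hr : StandingR r) : Continuous fun v : E => r ‖v‖ := by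
  refine continuous_iff_continuousAt.2 fun v => tendsto_iff_dist_tendsto_zero.2 ?_
  have hnorm : Tendsto (fun w => ‖w - v‖) (𝓝 v) (𝓝[Set.Ici 0] 0) :=
    tendsto_nhdsWithin_iff.2
      ⟨tendsto_norm_sub_self v, .of_forall fun w => norm_nonneg (w - v)⟩
  have hsub : Tendsto (fun w => r ‖w - v‖) (𝓝 v) (𝓝 0) := by
    simpa only [Function.comp_def, hr.map_zero] using hr.cont_at_zero.tendsto.comp hnorm
  exact squeeze_zero (fun _ => dist_nonneg) (fun w => hr.abs_map_norm_sub_map_norm_le w v) hsub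

lemma map_norm_sub_le_of_tendsto (hr : StandingR r) {ι : Type*} {l : Filter ι} [l.NeBot]
    {u : ι → E} {z x : E} {c : ℝ} (hu : Tendsto u l (𝓝 z))
    (h : ∀ᶠ n in l, r ‖u n - x‖ ≤ c) : r ‖z - x‖ ≤ c :=
  le_of_tendsto ((hr.continuous_map_norm.tendsto _).comp (hu.sub_const x)) h

end StandingR

lemma domination_constant_pos (hr : StandingR r) (hpos : ∀ x, 0 < Φ x)
    (hle : ∀ x : F, Φ x ≤ C * (r ‖(x : E)‖ + 1)) (x : F) : 0 < C :=
  pos_of_mul_pos_left ((hpos x).trans_le (hle x)) (by linarith [hr.map_norm_nonneg (x : E)])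

lemma map_norm_sub_le_of_le_mul_weight (hr : StandingR r)
    (hle : ∀ x : F, Φ x ≤ C * (r ‖(x : E)‖ + 1)) {ε : ℝ} (hε : 0 ≤ ε) (hC : 0 ≤ C)
    (hεC : ε * C ≤ 1 / 2) {x y : F} (h : r ‖(y : E) - x‖ ≤ ε * Φ y) :
    r ‖(y : E) - x‖ ≤ 2 * (ε * C) * (r ‖(x : E)‖ + 1) := by
  have hbase : r ‖(y : E) - x‖ ≤ ε * C * (r ‖(x : E)‖ + 1) + ε * C * r ‖(y : E) - x‖ :=
    calc r ‖(y : E) - x‖ ≤ ε * Φ y := h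
      _ ≤ ε * (C * (r ‖(y : E)‖ + 1)) := by gcongr; exact hle y
      _ ≤ ε * (C * (r ‖(x : E)‖ + r ‖(y : E) - x‖ + 1)) := by
        gcongr; exact hr.map_norm_le_add _ _
      _ = ε * C * (r ‖(x : E)‖ + 1) + ε * C * r ‖(y : E) - x‖ := by ring
  have habsorb : ε * C * r ‖(y : E) - x‖ ≤ 1 / 2 * r ‖(y : E) - x‖ :=
    mul_le_mul_of_nonneg_right hεC (hr.map_norm_nonneg _)
  linarith

lemma exists_pos_forall_norm_sub_lt (hr : StandingR r) (hpos : ∀ x, 0 < Φ x)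
    (hle : ∀ x : F, Φ x ≤ C * (r ‖(x : E)‖ + 1)) (x : F) {δ : ℝ} (hδ : 0 < δ) :
    ∃ ε : ℝ, 0 < ε ∧ ∀ y : F, r ‖(y : E) - x‖ ≤ ε * Φ y → ‖(y : E) - x‖ < δ := by
  have hC : 0 < C := domination_constant_pos hr hpos hle x
  have hrδ : 0 < r δ := hr.pos hδ
  set s := r ‖(x : E)‖ + 1
  have hs : 0 < s := by linarith [hr.map_norm_nonneg (x : E)]
  obtain ⟨η, hη, hη_half, hηδ⟩ : ∃ η : ℝ, 0 < η ∧ η ≤ 1 / 2 ∧ 2 * η * s < r δ := by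
    refine ⟨min (1 / 2) (r δ / (4 * s)), by positivity, min_le_left _ _, ?_⟩
    have hmin : min (1 / 2) (r δ / (4 * s)) * (4 * s) ≤ r δ :=
      (le_div_iff₀ (by positivity)).1 (min_le_right _ _)
    linarith
  have hηC : η / C * C = η := div_mul_cancel₀ η hC.ne'
  refine ⟨η / C, by positivity, fun y hy => hr.norm_lt_of_lt hδ ?_⟩
  have hyx :=
    map_norm_sub_le_of_le_mul_weight hr hle (by positivity) hC.le (hηC.trans_le hη_half) hy
  rw [hηC] at hyx
  exact hyx.trans_lt hηδ

lemma phiNorm_le_ofReal_iff (hpos : ∀ x, 0 < Φ x) {g : F → F} {ε : ℝ} (hε : 0 ≤ ε) :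
    phiNorm F Φ r g ≤ ENNReal.ofReal ε ↔ ∀ x, r ‖(g x : E) - x‖ ≤ ε * Φ x := by
  simp only [phiNorm, iSup_le_iff, ENNReal.ofReal_le_ofReal_iff hε, div_le_iff₀ (hpos _)]

lemma phiDist_le_ofReal_iff (hpos : ∀ x, 0 < Φ x) {f g : F ≃ₜ F} {ε : ℝ} (hε : 0 ≤ ε) :
    phiDist F Φ r f g ≤ ENNReal.ofReal ε ↔
      (∀ y, r ‖(f y : E) - g y‖ ≤ ε * Φ (g y)) ∧
        ∀ y, r ‖(f.symm y : E) - g.symm y‖ ≤ ε * Φ (g.symm y) := by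
  rw [phiDist, max_le_iff, phiNorm_le_ofReal_iff hpos hε, phiNorm_le_ofReal_iff hpos hε]
  refine and_congr (g.surjective.forall.trans ?_) (g.symm.surjective.forall.trans ?_)
  · simp only [Homeomorph.symm_apply_apply]
  · simp only [Homeomorph.apply_symm_apply]

lemma phiDist_symm_symm (f g : F ≃ₜ F) : phiDist F Φ r f.symm g.symm = phiDist F Φ r f g :=
  max_comm _ _

/-- The `ρ⁺_{Φ,r}`-Cauchy sequences in `Hom(F)`. The order `q ≤ p` of the indices matters because
`ρ_{Φ,r}` is not symmetric: the later term comes first. -/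
def IsRhoPlusCauchy (F : Set E) (Φ : F → ℝ) (r : ℝ → ℝ) (fn : ℕ → F ≃ₜ F) : Prop :=
  ∀ ε : ℝ, 0 < ε → ∃ N : ℕ, ∀ p q : ℕ, N ≤ q → q ≤ p →
    phiDist F Φ r (fn p) (fn q) ≤ ENNReal.ofReal ε

namespace IsRhoPlusCauchy

variable {fn : ℕ → F ≃ₜ F}

lemma symm (h : IsRhoPlusCauchy F Φ r fn) : IsRhoPlusCauchy F Φ r fun n => (fn n).symm := by
  simpa only [IsRhoPlusCauchy, phiDist_symm_symm] using h

lemma exists_forall_map_norm_sub_le (h : IsRhoPlusCauchy F Φ r fn) (hpos : ∀ x, 0 < Φ x) {ε : ℝ}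
    (hε : 0 < ε) :
    ∃ N, ∀ p q, N ≤ q → q ≤ p → ∀ y, r ‖(fn p y : E) - fn q y‖ ≤ ε * Φ (fn q y) :=
  (h ε hε).imp fun _ hN p q hq hp => ((phiDist_le_ofReal_iff hpos hε.le).1 (hN p q hq hp)).1

lemma exists_eventually_weight_le (h : IsRhoPlusCauchy F Φ r fn) (hr : StandingR r)
    (hpos : ∀ x, 0 < Φ x) (hle : ∀ x : F, Φ x ≤ C * (r ‖(x : E)‖ + 1)) (x : F) :
    ∃ (T : ℝ) (N : ℕ), ∀ᶠ y in 𝓝 x, ∀ n ≥ N, Φ (fn n y) ≤ T := by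
  have hC : 0 < C := domination_constant_pos hr hpos hle x
  obtain ⟨N, hN⟩ := h.exists_forall_map_norm_sub_le hpos one_pos
  set ν : F → ℝ := fun y => r ‖(fn N y : E)‖
  have hν : Continuous ν :=
    hr.continuous_map_norm.comp (continuous_subtype_val.comp (fn N).continuous)
  refine ⟨C * (ν x + 1 + C * (ν x + 1 + 1) + 1), N, ?_⟩
  filter_upwards [hν.continuousAt.eventually_lt_const (lt_add_one (ν x))] with y hy n hn
  have hmove : r ‖(fn n y : E) - fn N y‖ ≤ C * (ν y + 1) :=
    (hN n N le_rfl hn y).trans (by simpa only [one_mul] using hle (fn N y))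
  calc Φ (fn n y) ≤ C * (r ‖(fn n y : E)‖ + 1) := hle _
    _ ≤ C * (ν y + C * (ν y + 1) + 1) := by
      gcongr
      exact (hr.map_norm_le_add _ _).trans (add_le_add_right hmove _)
    _ ≤ C * (ν x + 1 + C * (ν x + 1 + 1) + 1) := by gcongr

lemma exists_mem_nhds_uniformCauchySeqOn (h : IsRhoPlusCauchy F Φ r fn) (hr : StandingR r)
    (hpos : ∀ x, 0 < Φ x) (hle : ∀ x : F, Φ x ≤ C * (r ‖(x : E)‖ + 1)) (x : F) :
    ∃ t ∈ 𝓝 x, UniformCauchySeqOn (fun n => fn n) atTop t := by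
  obtain ⟨T, N₀, hT⟩ := h.exists_eventually_weight_le hr hpos hle x
  have hT_pos : 0 < T := (hpos _).trans_le (hT.self_of_nhds N₀ le_rfl)
  refine ⟨_, hT, Metric.uniformCauchySeqOn_iff.2 fun δ hδ => ?_⟩
  have hrδ : 0 < r δ := hr.pos hδ
  obtain ⟨N, hN⟩ := h.exists_forall_map_norm_sub_le hpos (ε := r δ / (2 * T)) (by positivity)
  have hdist (p q : ℕ) (hq : max N N₀ ≤ q) (hqp : q ≤ p) (y : F)
      (hy : ∀ n ≥ N₀, Φ (fn n y) ≤ T) : dist (fn p y) (fn q y) < δ := by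
    rw [Subtype.dist_eq, dist_eq_norm]
    refine hr.norm_lt_of_lt hδ ?_
    calc r ‖(fn p y : E) - fn q y‖ ≤ r δ / (2 * T) * Φ (fn q y) :=
          hN p q ((le_max_left _ _).trans hq) hqp y
      _ ≤ r δ / (2 * T) * T := by gcongr; exact hy q ((le_max_right _ _).trans hq)
      _ = r δ / 2 := by field_simp
      _ < r δ := half_lt_self hrδ
  refine ⟨max N N₀, fun p hp q hq y hy => ?_⟩
  rcases le_total q p with hqp | hpq
  · exact hdist p q hq hqp y hy
  · exact dist_comm (fn p y) (fn q y) ▸ hdist q p hp hpq y hy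

lemma exists_forall_symm_apply_mem (h : IsRhoPlusCauchy F Φ r fn) (hr : StandingR r)
    (hpos : ∀ x, 0 < Φ x) (hle : ∀ x : F, Φ x ≤ C * (r ‖(x : E)‖ + 1)) {x : F} {U : Set F}
    (hU : U ∈ 𝓝 x) : ∃ N, ∀ p q, N ≤ q → q ≤ p → (fn q).symm (fn p x) ∈ U := by
  obtain ⟨δ, hδ, hδU⟩ := Metric.mem_nhds_iff.1 hU
  obtain ⟨ε, hε, hclose⟩ := exists_pos_forall_norm_sub_lt hr hpos hle x hδ
  obtain ⟨N, hN⟩ := h.symm.exists_forall_map_norm_sub_le hpos hε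
  refine ⟨N, fun p q hq hqp => hδU ?_⟩
  rw [Metric.mem_ball, Subtype.dist_eq, dist_eq_norm]
  refine hclose _ ?_
  simpa only [Homeomorph.symm_apply_apply, norm_sub_rev] using hN p q hq hqp (fn p x)

lemma exists_isCompact_eventually_mem [WeaklyLocallyCompactSpace F] (h : IsRhoPlusCauchy F Φ r fn)
    (hr : StandingR r) (hpos : ∀ x, 0 < Φ x) (hle : ∀ x : F, Φ x ≤ C * (r ‖(x : E)‖ + 1))
    (x : F) : ∃ K : Set F, IsCompact K ∧ ∀ᶠ n in atTop, fn n x ∈ K := by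
  obtain ⟨K, hK, hKx⟩ := exists_compact_mem_nhds x
  obtain ⟨q, hq⟩ := h.exists_forall_symm_apply_mem hr hpos hle hKx
  refine ⟨fn q '' K, hK.image (fn q).continuous, ?_⟩
  filter_upwards [eventually_ge_atTop q] with p hp
  exact ⟨_, hq p q le_rfl hp, (fn q).apply_symm_apply _⟩

lemma exists_tendstoLocallyUniformly [WeaklyLocallyCompactSpace F] (h : IsRhoPlusCauchy F Φ r fn)
    (hr : StandingR r) (hpos : ∀ x, 0 < Φ x) (hle : ∀ x : F, Φ x ≤ C * (r ‖(x : E)‖ + 1)) :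
    ∃ f : F → F, TendstoLocallyUniformly (fun n => fn n) f atTop := by
  have hlim (x : F) : ∃ z, Tendsto (fun n => fn n x) atTop (𝓝 z) := by
    obtain ⟨t, ht, hcauchy⟩ := h.exists_mem_nhds_uniformCauchySeqOn hr hpos hle x
    obtain ⟨K, hK, hmem⟩ := h.exists_isCompact_eventually_mem hr hpos hle x
    obtain ⟨z, -, hz⟩ :=
      hK.isComplete _ (hcauchy.cauchy_map (mem_of_mem_nhds ht)) (le_principal_iff.2 hmem)
    exact ⟨z, hz⟩
  choose f hf using hlim
  refine ⟨f, tendstoLocallyUniformly_of_forall_exists_nhds fun x => ?_⟩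
  obtain ⟨t, ht, hcauchy⟩ := h.exists_mem_nhds_uniformCauchySeqOn hr hpos hle x
  exact ⟨t, ht, hcauchy.tendstoUniformlyOn_of_tendsto fun y _ => hf y⟩

lemma tendsto_phiDist (h : IsRhoPlusCauchy F Φ r fn) (hr : StandingR r) (hpos : ∀ x, 0 < Φ x)
    {f : F ≃ₜ F} (hf : ∀ y, Tendsto (fn · y) atTop (𝓝 (f y)))
    (hf_symm : ∀ y, Tendsto (fun n => (fn n).symm y) atTop (𝓝 (f.symm y))) :
    Tendsto (fun n => phiDist F Φ r f (fn n)) atTop (𝓝 0) := by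
  refine tendsto_nhds_zero_of_eventually_le_ofReal fun ε hε => ?_
  obtain ⟨N, hN⟩ := h ε hε
  filter_upwards [eventually_ge_atTop N] with q hq
  have hpq (p : ℕ) (hp : q ≤ p) := (phiDist_le_ofReal_iff hpos hε.le).1 (hN p q hq hp)
  refine (phiDist_le_ofReal_iff hpos hε.le).2 ⟨fun y => ?_, fun y => ?_⟩
  · exact hr.map_norm_sub_le_of_tendsto (tendsto_subtype_rng.1 (hf y))
      ((eventually_ge_atTop q).mono fun p hp => (hpq p hp).1 y)
  · exact hr.map_norm_sub_le_of_tendsto (tendsto_subtype_rng.1 (hf_symm y))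
      ((eventually_ge_atTop q).mono fun p hp => (hpq p hp).2 y)

end IsRhoPlusCauchy

lemma MemE.le_mul_map_norm_add_one {R : ℝ → ℝ} {m β γ a b : ℝ} (hΦ : MemE F R Φ m β γ)
    (hr : StandingR r) (ha : 0 ≤ a) (hb : 0 ≤ b) (hCrR : ∀ u, 0 ≤ u → R u ≤ a * r u + b) (x : F) :
    Φ x ≤ β * (a + b) * (r ‖(x : E)‖ + 1) := by
  have hβ : 0 < β := hΦ.gamma_pos.trans hΦ.gamma_lt_beta
  have hrx : 0 ≤ r ‖(x : E)‖ := hr.map_norm_nonneg _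
  calc Φ x ≤ β * R ‖(x : E)‖ := hΦ.upper x
    _ ≤ β * (a * r ‖(x : E)‖ + b) := by gcongr; exact hCrR _ (norm_nonneg _)
    _ ≤ β * ((a + b) * (r ‖(x : E)‖ + 1)) := by
      gcongr; linarith [mul_nonneg hb hrx]
    _ = β * (a + b) * (r ‖(x : E)‖ + 1) := by ring

theorem statement7_general [WeaklyLocallyCompactSpace F] (hr : StandingR r)
    (hpos : ∀ x, 0 < Φ x) (hle : ∀ x : F, Φ x ≤ C * (r ‖(x : E)‖ + 1))
    {fn : ℕ → F ≃ₜ F} (hfn : IsRhoPlusCauchy F Φ r fn) :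
    ∃ f : F ≃ₜ F, Tendsto (fun n => phiDist F Φ r f (fn n)) atTop (𝓝 0) := by
  obtain ⟨f, hf⟩ := hfn.exists_tendstoLocallyUniformly hr hpos hle
  obtain ⟨g, hg⟩ := hfn.symm.exists_tendstoLocallyUniformly hr hpos hle
  obtain ⟨h, rfl, rfl⟩ := exists_homeomorph_of_tendstoLocallyUniformly hf hg
  exact ⟨h, hfn.tendsto_phiDist hr hpos
    (fun _ => hf.tendsto_comp h.continuous.continuousAt tendsto_const_nhds)
    (fun _ => hg.tendsto_comp h.symm.continuous.continuousAt tendsto_const_nhds)⟩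

end DominatedWeight

/-- Convergence of ρ⁺-Cauchy sequences: under (C1) and (C2), `{f_n}` converges in
`T⁻(ρ_{Φ,r})` towards an element of `Hom(F)`. -/
theorem statement7 {E : Type*} [NormedAddCommGroup E] [NormedSpace ℝ E] [FiniteDimensional ℝ E]
    (F : Set E) (hFnc : ¬ IsCompact F)
    [LocallyConnectedSpace ↥F] [SigmaCompactSpace ↥F] [LocallyCompactSpace ↥F]
    (R : ℝ → ℝ) (hR : GrowthFun R)
    (Φ : F → ℝ) (m β γ : ℝ) (hΦ : MemE F R Φ m β γ)
    (r : ℝ → ℝ) (hr : StandingR r) (hAr : Ar F r)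
    (a b : ℝ) (ha : 0 < a) (hb : 0 < b) (hCrR : ∀ u, 0 ≤ u → R u ≤ a * r u + b)
    (fn : ℕ → F ≃ₜ F)
    (hC1 : ∀ K : Set F, IsCompact K → ∃ M : ℝ, ∀ n : ℕ, ∀ x ∈ K,
      ‖(fn n x : E)‖ ≤ M ∧ ‖((fn n).symm x : E)‖ ≤ M)
    (hC2 : ∀ ε : ℝ, 0 < ε → ∃ N : ℕ, ∀ p q : ℕ, N ≤ q → q ≤ p →
      phiDist F Φ r (fn p) (fn q) ≤ ENNReal.ofReal ε) :
    ∃ f : F ≃ₜ F,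
      Filter.Tendsto (fun n => phiDist F Φ r f (fn n)) Filter.atTop (nhds 0) := by
  exact statement7_general hr (fun x => hΦ.m_pos.trans_le (hΦ.m_le x))
    (hΦ.le_mul_map_norm_add_one hr ha.le hb.le hCrR) hC2
end
end

section
/- Let f, g ∈ L_r(F) and let Φ ∈ E_F^R be a common generalized eigenfunction solving the problem P_α for some α > 1, i.e. Φ(f(x)) ≥ α·λ_r(f)·Φ(x) and Φ(g(x)) ≥ α·λ_r(g)·Φ(x) for all x ∈ F. Then the conjugacy operator L_{f,g} is a contraction for the premetric ρ_{Φ,r}: for all h₁, h₂ ∈ Hom(F), ρ_{Φ,r}(L_{f,g}(h₁), L_{f,g}(h₂)) ≤ (1/α)·ρ_{Φ,r}(h₁, h₂). -/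
open Filter Topology
open scoped ENNReal

noncomputable section

/-!
Conjugation by `f` moves the displacement of a map `k` at `y` to the point `f y`: it becomes
`‖f (k y) - f y‖`, whose image under `r` has grown by a factor at most `λ_r(f)`. The weight grows
by a factor at least `α λ_r(f)` from `y` to `f y`, so the weighted displacement shrinks by `1 / α`.
The two terms of the premetric at `L_{f,g}(h₁)`, `L_{f,g}(h₂)` are displacements of the conjugates
by `f` of `h₁ ∘ h₂⁻¹` and by `g` of `h₁⁻¹ ∘ h₂`.
-/

section Contraction

variable {E : Type*} [NormedAddCommGroup E] {F : Set E} {Φ : F → ℝ} {r : ℝ → ℝ} {α : ℝ}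

/-- `Φ` is a generalized eigenfunction of `f`: it solves the problem `P_α`, that is,
`Φ ∘ f ≥ α λ_r(f) Φ`. Finiteness of `λ_r(f)` is part of the notion, so that its real value
`(lambdaR F r f).toReal` is not the junk value `0`. -/
structure IsGeneralizedEigenfunction (Φ : F → ℝ) (r : ℝ → ℝ) (α : ℝ) (f : F → F) : Prop where
  lambdaR_ne_top : lambdaR F r f ≠ ⊤
  le_apply : ∀ x : F, α * (lambdaR F r f).toReal * Φ x ≤ Φ (f x)

theorem apply_norm_sub_le_lambdaR_mul (hr_nonneg : ∀ u, 0 ≤ u → 0 ≤ r u)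
    (hr_zero : ∀ u, 0 ≤ u → (r u = 0 ↔ u = 0)) {f : F → F} (hf : lambdaR F r f ≠ ⊤) (x y : F) :
    r ‖(f x : E) - f y‖ ≤ (lambdaR F r f).toReal * r ‖(x : E) - y‖ := by
  rcases eq_or_ne x y with rfl | hxy
  · simp [(hr_zero 0 le_rfl).2 rfl]
  have hr_ne : r ‖(x : E) - y‖ ≠ 0 := by
    rwa [Ne, hr_zero _ (norm_nonneg _), norm_eq_zero, sub_eq_zero, Subtype.coe_inj]
  have hr_pos : 0 < r ‖(x : E) - y‖ := (hr_nonneg _ (norm_nonneg _)).lt_of_ne' hr_ne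
  have hquot : ENNReal.ofReal (r ‖(f x : E) - f y‖ / r ‖(x : E) - y‖) ≤ lambdaR F r f :=
    le_iSup₂_of_le x y (le_iSup_of_le hxy le_rfl)
  exact (div_le_iff₀ hr_pos).1 ((ENNReal.ofReal_le_iff_le_toReal hf).1 hquot)

theorem IsGeneralizedEigenfunction.apply_norm_sub_div_le {f : F → F}
    (hf : IsGeneralizedEigenfunction Φ r α f) (hr_nonneg : ∀ u, 0 ≤ u → 0 ≤ r u)
    (hr_zero : ∀ u, 0 ≤ u → (r u = 0 ↔ u = 0)) (hΦ : ∀ x, 0 < Φ x) (hα : 0 < α) (x y : F) :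
    r ‖(f x : E) - f y‖ / Φ (f y) ≤ 1 / α * (r ‖(x : E) - y‖ / Φ y) := by
  have hlambda : (lambdaR F r f).toReal ≤ Φ (f y) / (α * Φ y) := by
    rw [le_div_iff₀ (mul_pos hα (hΦ y))]
    linarith [hf.le_apply y]
  have hr_xy : 0 ≤ r ‖(x : E) - y‖ := hr_nonneg _ (norm_nonneg _)
  rw [div_le_iff₀ (hΦ (f y))]
  calc r ‖(f x : E) - f y‖
      ≤ (lambdaR F r f).toReal * r ‖(x : E) - y‖ :=
        apply_norm_sub_le_lambdaR_mul hr_nonneg hr_zero hf.lambdaR_ne_top x y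
    _ ≤ Φ (f y) / (α * Φ y) * r ‖(x : E) - y‖ := by gcongr
    _ = 1 / α * (r ‖(x : E) - y‖ / Φ y) * Φ (f y) := by ring

theorem IsGeneralizedEigenfunction.phiNorm_le_of_semiconj {f k k' : F → F}
    (hf : IsGeneralizedEigenfunction Φ r α f) (hr_nonneg : ∀ u, 0 ≤ u → 0 ≤ r u)
    (hr_zero : ∀ u, 0 ≤ u → (r u = 0 ↔ u = 0)) (hΦ : ∀ x, 0 < Φ x) (hα : 0 < α)
    (hf_surj : Function.Surjective f) (hk : Function.Semiconj f k k') :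
    phiNorm F Φ r k' ≤ ENNReal.ofReal (1 / α) * phiNorm F Φ r k := by
  refine iSup_le <| hf_surj.forall.2 fun y => ?_
  calc ENNReal.ofReal (r ‖(k' (f y) : E) - f y‖ / Φ (f y))
      = ENNReal.ofReal (r ‖(f (k y) : E) - f y‖ / Φ (f y)) := by rw [hk y]
    _ ≤ ENNReal.ofReal (1 / α * (r ‖(k y : E) - y‖ / Φ y)) :=
        ENNReal.ofReal_le_ofReal (hf.apply_norm_sub_div_le hr_nonneg hr_zero hΦ hα (k y) y)
    _ = ENNReal.ofReal (1 / α) * ENNReal.ofReal (r ‖(k y : E) - y‖ / Φ y) :=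
        ENNReal.ofReal_mul (by positivity)
    _ ≤ ENNReal.ofReal (1 / α) * phiNorm F Φ r k := by
        gcongr
        exact le_iSup (fun x : F => ENNReal.ofReal (r ‖(k x : E) - x‖ / Φ x)) y

theorem semiconj_conjOp_comp_symm (f g h₁ h₂ : F ≃ₜ F) :
    Function.Semiconj f (fun x => h₁ (h₂.symm x))
      (fun x => conjOp F f g h₁ ((conjOp F f g h₂).symm x)) :=
  fun x => by simp [conjOp]

theorem semiconj_conjOp_symm_comp (f g h₁ h₂ : F ≃ₜ F) :
    Function.Semiconj g (fun x => h₁.symm (h₂ x))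
      (fun x => (conjOp F f g h₁).symm (conjOp F f g h₂ x)) :=
  fun x => by simp [conjOp]

theorem statement12_general (hr_nonneg : ∀ u, 0 ≤ u → 0 ≤ r u)
    (hr_zero : ∀ u, 0 ≤ u → (r u = 0 ↔ u = 0)) (hΦ : ∀ x, 0 < Φ x) (hα : 0 < α) {f g : F ≃ₜ F}
    (hf : IsGeneralizedEigenfunction Φ r α f) (hg : IsGeneralizedEigenfunction Φ r α g)
    (h₁ h₂ : F ≃ₜ F) :
    phiDist F Φ r (conjOp F f g h₁) (conjOp F f g h₂) ≤
      ENNReal.ofReal (1 / α) * phiDist F Φ r h₁ h₂ := by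
  rw [phiDist, phiDist, mul_max]
  exact max_le_max
    (hf.phiNorm_le_of_semiconj hr_nonneg hr_zero hΦ hα f.surjective
      (semiconj_conjOp_comp_symm f g h₁ h₂))
    (hg.phiNorm_le_of_semiconj hr_nonneg hr_zero hΦ hα g.surjective
      (semiconj_conjOp_symm_comp f g h₁ h₂))

end Contraction

/-- If `Φ ∈ E_F^R` solves the generalized eigenvalue problem `P_α` for `f, g ∈ L_r(F)` and
`α > 1`, then the conjugacy operator `L_{f,g}` is a `(1/α)`-contraction for `ρ_{Φ,r}`. -/
theorem statement12 {E : Type*} [NormedAddCommGroup E] [NormedSpace ℝ E] [FiniteDimensional ℝ E]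
    (F : Set E) (hFnc : ¬ IsCompact F)
    (R : ℝ → ℝ) (hR : GrowthFun R)
    (Φ : F → ℝ) (m β γ : ℝ) (hΦ : MemE F R Φ m β γ)
    (r : ℝ → ℝ) (hr : StandingR r)
    (f g : F ≃ₜ F) (hf : f ∈ LipGroup F r) (hg : g ∈ LipGroup F r)
    (α : ℝ) (hα : 1 < α)
    (hPf : ∀ x : F, α * (lambdaR F r ⇑f).toReal * Φ x ≤ Φ (f x))
    (hPg : ∀ x : F, α * (lambdaR F r ⇑g).toReal * Φ x ≤ Φ (g x)) :
    ∀ h₁ h₂ : F ≃ₜ F,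
      phiDist F Φ r (conjOp F f g h₁) (conjOp F f g h₂) ≤
        ENNReal.ofReal (1 / α) * phiDist F Φ r h₁ h₂ :=
  statement12_general hr.nonneg hr.zero_iff (fun x => hΦ.m_pos.trans_le (hΦ.m_le x))
    (one_pos.trans hα) ⟨hf.1.ne, hPf⟩ ⟨hg.1.ne, hPg⟩
end
end

section
/- Let f, g ∈ L_r(F) and Φ ∈ E_F^R. Then for all h₁, h₂ ∈ Hom(F): |L_{f,g}(h₁) ∘ (L_{f,g}(h₂))⁻¹|_{Φ,r} ≤ λ_r(f) · sup_{u ∈ F}(Φ(u)/Φ(f(u))) · |h₁ ∘ h₂⁻¹|_{Φ,r}, and |(L_{f,g}(h₁))⁻¹ ∘ L_{f,g}(h₂)|_{Φ,r} ≤ λ_r(g) · sup_{u ∈ F}(Φ(u)/Φ(g(u))) · |h₁⁻¹ ∘ h₂|_{Φ,r}. -/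
open Filter Topology
open scoped ENNReal

noncomputable section

/-!
Since `L_{f,g}(h₁) ∘ L_{f,g}(h₂)⁻¹ = f ∘ (h₁ ∘ h₂⁻¹) ∘ f⁻¹`, and dually
`L_{f,g}(h₁)⁻¹ ∘ L_{f,g}(h₂) = g ∘ (h₁⁻¹ ∘ h₂) ∘ g⁻¹`, both estimates bound the `Φ`-norm of a
conjugate `f ∘ k ∘ f⁻¹`. At the point `f u`, the displacement `f (k u) - f u` of this conjugate is
controlled by `λ_r(f)` and the displacement `k u - u`, and replacing the weight `Φ (f u)` by `Φ u`
costs the factor `Φ u / Φ (f u)`.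
-/

theorem StandingR.map_zero_s13 {r : ℝ → ℝ} (hr : StandingR r) : r 0 = 0 :=
  (hr.zero_iff 0 le_rfl).2 rfl

theorem StandingR.map_pos {r : ℝ → ℝ} (hr : StandingR r) (u : ℝ) (hu : 0 < u) : 0 < r u :=
  (hr.nonneg u hu.le).lt_of_ne fun h => hu.ne' ((hr.zero_iff u hu.le).1 h.symm)

section

variable {E : Type*} [NormedAddCommGroup E] {F : Set E}

theorem MemE.pos {R : ℝ → ℝ} {Φ : F → ℝ} {m β γ : ℝ} (hΦ : MemE F R Φ m β γ) (x : F) : 0 < Φ x :=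
  hΦ.m_pos.trans_le (hΦ.m_le x)

theorem conjOp_apply_conjOp_symm_apply (f g h₁ h₂ : F ≃ₜ F) (x : F) :
    conjOp F f g h₁ ((conjOp F f g h₂).symm x) = f (h₁ (h₂.symm (f.symm x))) := by
  simp [conjOp]

theorem conjOp_symm_apply_conjOp_apply (f g h₁ h₂ : F ≃ₜ F) (x : F) :
    (conjOp F f g h₁).symm (conjOp F f g h₂ x) = g (h₁.symm (h₂ (g.symm x))) := by
  simp [conjOp]

theorem ofReal_div_le_phiNorm (Φ : F → ℝ) (r : ℝ → ℝ) (k : F → F) (x : F) :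
    ENNReal.ofReal (r ‖(k x : E) - (x : E)‖ / Φ x) ≤ phiNorm F Φ r k :=
  le_iSup (fun x : F => ENNReal.ofReal (r ‖(k x : E) - (x : E)‖ / Φ x)) x

theorem ofReal_div_le_lambdaR (r : ℝ → ℝ) (f : F → F) {x y : F} (hxy : x ≠ y) :
    ENNReal.ofReal (r ‖(f x : E) - (f y : E)‖ / r ‖(x : E) - (y : E)‖) ≤ lambdaR F r f :=
  le_iSup₂_of_le x y (le_iSup_of_le hxy le_rfl)

variable {r : ℝ → ℝ}

theorem ofReal_le_lambdaR_mul (hr₀ : r 0 = 0) (hr : ∀ u, 0 < u → 0 < r u) (f : F → F) (x y : F) :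
    ENNReal.ofReal (r ‖(f x : E) - (f y : E)‖) ≤
      lambdaR F r f * ENNReal.ofReal (r ‖(x : E) - (y : E)‖) := by
  rcases eq_or_ne x y with rfl | hxy
  · simp [hr₀]
  have hpos : 0 < r ‖(x : E) - (y : E)‖ :=
    hr _ (norm_sub_pos_iff.2 (Subtype.coe_injective.ne hxy))
  calc ENNReal.ofReal (r ‖(f x : E) - (f y : E)‖)
      = ENNReal.ofReal (r ‖(f x : E) - (f y : E)‖ / r ‖(x : E) - (y : E)‖) *
          ENNReal.ofReal (r ‖(x : E) - (y : E)‖) := by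
        rw [← ENNReal.ofReal_mul' hpos.le, div_mul_cancel₀ _ hpos.ne']
    _ ≤ lambdaR F r f * ENNReal.ofReal (r ‖(x : E) - (y : E)‖) := by
        gcongr
        exact ofReal_div_le_lambdaR r f hxy

variable {Φ : F → ℝ}

theorem phiNorm_conj_le (hΦ : ∀ x, 0 < Φ x) (hr₀ : r 0 = 0) (hr : ∀ u, 0 < u → 0 < r u)
    (f : F ≃ F) (k : F → F) :
    phiNorm F Φ r (fun x => f (k (f.symm x))) ≤
      lambdaR F r f * (⨆ u : F, ENNReal.ofReal (Φ u / Φ (f u))) * phiNorm F Φ r k := by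
  refine iSup_le fun x => ?_
  obtain ⟨u, rfl⟩ := f.surjective x
  have change_weight : ENNReal.ofReal (r ‖(k u : E) - (u : E)‖) / ENNReal.ofReal (Φ (f u)) =
      ENNReal.ofReal (Φ u / Φ (f u)) * ENNReal.ofReal (r ‖(k u : E) - (u : E)‖ / Φ u) := by
    rw [← ENNReal.ofReal_div_of_pos (hΦ _),
      ← ENNReal.ofReal_mul (div_pos (hΦ u) (hΦ (f u))).le, mul_comm,
      div_mul_div_cancel₀ (hΦ u).ne']
  calc ENNReal.ofReal (r ‖(f (k (f.symm (f u))) : E) - (f u : E)‖ / Φ (f u))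
      = ENNReal.ofReal (r ‖(f (k u) : E) - (f u : E)‖) / ENNReal.ofReal (Φ (f u)) := by
        rw [f.symm_apply_apply, ENNReal.ofReal_div_of_pos (hΦ _)]
    _ ≤ lambdaR F r f * ENNReal.ofReal (r ‖(k u : E) - (u : E)‖) / ENNReal.ofReal (Φ (f u)) := by
        gcongr
        exact ofReal_le_lambdaR_mul hr₀ hr f (k u) u
    _ = lambdaR F r f * ENNReal.ofReal (Φ u / Φ (f u)) *
          ENNReal.ofReal (r ‖(k u : E) - (u : E)‖ / Φ u) := by
        rw [mul_div_assoc, change_weight, mul_assoc]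
    _ ≤ lambdaR F r f * (⨆ u : F, ENNReal.ofReal (Φ u / Φ (f u))) * phiNorm F Φ r k := by
        gcongr
        · exact le_iSup (fun u : F => ENNReal.ofReal (Φ u / Φ (f u))) u
        · exact ofReal_div_le_phiNorm Φ r k u

theorem statement13_general (hΦ : ∀ x, 0 < Φ x) (hr₀ : r 0 = 0) (hr : ∀ u, 0 < u → 0 < r u)
    (f g h₁ h₂ : F ≃ₜ F) :
    phiNorm F Φ r (fun x => (conjOp F f g h₁) ((conjOp F f g h₂).symm x)) ≤
        lambdaR F r ⇑f * (⨆ u : F, ENNReal.ofReal (Φ u / Φ (f u))) *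
          phiNorm F Φ r (fun x => h₁ (h₂.symm x)) ∧
      phiNorm F Φ r (fun x => (conjOp F f g h₁).symm ((conjOp F f g h₂) x)) ≤
        lambdaR F r ⇑g * (⨆ u : F, ENNReal.ofReal (Φ u / Φ (g u))) *
          phiNorm F Φ r (fun x => h₁.symm (h₂ x)) := by
  simp only [conjOp_apply_conjOp_symm_apply, conjOp_symm_apply_conjOp_apply]
  exact ⟨phiNorm_conj_le hΦ hr₀ hr f.toEquiv fun x => h₁ (h₂.symm x),
    phiNorm_conj_le hΦ hr₀ hr g.toEquiv fun x => h₁.symm (h₂ x)⟩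

end

/-- The two basic estimates for the conjugacy operator:
`|L_{f,g}(h₁) ∘ (L_{f,g}(h₂))⁻¹|_{Φ,r} ≤ λ_r(f) · sup_u Φ(u)/Φ(f(u)) · |h₁∘h₂⁻¹|_{Φ,r}` and
`|(L_{f,g}(h₁))⁻¹ ∘ L_{f,g}(h₂)|_{Φ,r} ≤ λ_r(g) · sup_u Φ(u)/Φ(g(u)) · |h₁⁻¹∘h₂|_{Φ,r}`. -/
theorem statement13 {E : Type*} [NormedAddCommGroup E] [NormedSpace ℝ E] [FiniteDimensional ℝ E]
    (F : Set E) (hFnc : ¬ IsCompact F)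
    (R : ℝ → ℝ) (hR : GrowthFun R)
    (Φ : F → ℝ) (m β γ : ℝ) (hΦ : MemE F R Φ m β γ)
    (r : ℝ → ℝ) (hr : StandingR r)
    (f g : F ≃ₜ F) (hf : f ∈ LipGroup F r) (hg : g ∈ LipGroup F r) :
    ∀ h₁ h₂ : F ≃ₜ F,
      phiNorm F Φ r (fun x => (conjOp F f g h₁) ((conjOp F f g h₂).symm x)) ≤
        lambdaR F r ⇑f * (⨆ u : F, ENNReal.ofReal (Φ u / Φ (f u))) *
          phiNorm F Φ r (fun x => h₁ (h₂.symm x)) ∧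
      phiNorm F Φ r (fun x => (conjOp F f g h₁).symm ((conjOp F f g h₂) x)) ≤
        lambdaR F r ⇑g * (⨆ u : F, ENNReal.ofReal (Φ u / Φ (g u))) *
          phiNorm F Φ r (fun x => h₁.symm (h₂ x)) :=
  statement13_general hΦ.pos hr.map_zero_s13 hr.map_pos f g
end
end

section
/- Let E be a real normed vector space, F a subset of E, f : F → F a map with λ_r(f) < ∞, α > 1, and A : E → E an invertible continuous linear map such that ‖A⁻¹‖⁻¹ ≥ α·λ_r(f). If Ψ : F → E satisfies the generalized Schröder equation Ψ(f(x)) = A(Ψ(x)) for all x ∈ F, then Φ(x) := ‖Ψ(x)‖ satisfies Φ(f(x)) ≥ α·λ_r(f)·Φ(x) for all x ∈ F, i.e. Φ is a generalized eigenfunction of the Koopman operator U_f with generalized eigenvalue α·λ_r(f). -/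
open Filter Topology
open scoped ENNReal

noncomputable section

/-- `Φ` is a generalized eigenfunction of the Koopman operator `U_f Φ = Φ ∘ f`, with generalized
eigenvalue `c`: the eigenvalue equation is relaxed to a pointwise inequality. -/
def IsGeneralizedKoopmanEigenfunction {X : Type*} (f : X → X) (c : ℝ) (Φ : X → ℝ) : Prop :=
  c • Φ ≤ Φ ∘ f

namespace IsGeneralizedKoopmanEigenfunction

variable {X : Type*} {f : X → X} {c : ℝ}

theorem of_le {c' : ℝ} {Φ : X → ℝ} (h : IsGeneralizedKoopmanEigenfunction f c Φ) (hΦ : 0 ≤ Φ)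
    (hc : c' ≤ c) : IsGeneralizedKoopmanEigenfunction f c' Φ :=
  (smul_le_smul_of_nonneg_right hc hΦ).trans h

theorem comp_semiconj {Y : Type*} {g : Y → Y} {Ψ : X → Y} {Φ : Y → ℝ}
    (h : IsGeneralizedKoopmanEigenfunction g c Φ) (hΨ : Function.Semiconj Ψ f g) :
    IsGeneralizedKoopmanEigenfunction f c (Φ ∘ Ψ) := fun x =>
  (h (Ψ x)).trans_eq (congrArg Φ (hΨ x).symm)

theorem norm_of_antilipschitzWith {E : Type*} [SeminormedAddCommGroup E] {A : E → E} {K : NNReal}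
    (hA : AntilipschitzWith K A) (hA₀ : A 0 = 0) :
    IsGeneralizedKoopmanEigenfunction A (K : ℝ)⁻¹ (‖·‖) := fun v =>
  inv_mul_le_of_le_mul₀ K.coe_nonneg (norm_nonneg (A v)) (hA.le_mul_norm hA₀ v)

end IsGeneralizedKoopmanEigenfunction

theorem statement17_general {X E : Type*} [SeminormedAddCommGroup E] {f : X → X} {A : E → E}
    {K : NNReal} (hA : AntilipschitzWith K A) (hA₀ : A 0 = 0) {Ψ : X → E}
    (hΨ : Function.Semiconj Ψ f A) {c : ℝ} (hc : c ≤ (K : ℝ)⁻¹) :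
    IsGeneralizedKoopmanEigenfunction f c (‖Ψ ·‖) :=
  ((IsGeneralizedKoopmanEigenfunction.norm_of_antilipschitzWith hA hA₀).comp_semiconj hΨ).of_le
    (fun _ => norm_nonneg _) hc

/-- A solution `Ψ` of the generalized Schröder equation `Ψ∘f = A∘Ψ` with
`‖A⁻¹‖⁻¹ ≥ α·λ_r(f)` yields the generalized eigenfunction `Φ = ‖Ψ(⬝)‖` of the Koopman
operator `U_f`, with generalized eigenvalue `α·λ_r(f)`. -/
theorem statement17 {E : Type*} [NormedAddCommGroup E] [NormedSpace ℝ E]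
    (F : Set E) (r : ℝ → ℝ) (hr : StandingR r)
    (f : F → F) (hf : lambdaR F r f < ⊤)
    (α : ℝ) (hα : 1 < α)
    (A : E ≃L[ℝ] E)
    (hA : α * (lambdaR F r f).toReal ≤ ‖(A.symm : E →L[ℝ] E)‖⁻¹)
    (Ψ : F → E) (hΨ : ∀ x : F, Ψ (f x) = A (Ψ x)) :
    ∀ x : F, α * (lambdaR F r f).toReal * ‖Ψ x‖ ≤ ‖Ψ (f x)‖ :=
  statement17_general A.antilipschitz (map_zero A) hΨ hA
end
end
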